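/- Let f, g : I → ℝ be continuous and strictly monotone. Then A^[f] = A^[g] (i.e., A^[f](a) = A^[g](a) for every n ≥ 1 and every a ∈ Iⁿ) if and only if there exist real numbers α, β with α ≠ 0 such that f(x) = α·g(x) + β for all x ∈ I. -/

import Mathlib

open Set Function Filter

/-- The quasi-arithmetic mean generated by `f` on the interval `I`,
applied to a vector `a ∈ Iⁿ`: `f⁻¹((f a₁ + ⋯ + f aₙ)/n)`, where the
inverse of `f` is taken on `I`. -/
noncomputable def qam (I : Set ℝ) (f : ℝ → ℝ) {n : ℕ} (a : Fin n → ℝ) : ℝ :=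
  Function.invFunOn f I ((∑ i, f (a i)) / n)

/-- The natural (pointwise) partial order on quasi-arithmetic means:
`A^[f] ≤ A^[g]` iff `A^[f](a) ≤ A^[g](a)` for every `n ≥ 1` and every `a ∈ Iⁿ`. -/
def qamLE (I : Set ℝ) (f g : ℝ → ℝ) : Prop :=
  ∀ n : ℕ, 1 ≤ n → ∀ a : Fin n → ℝ, (∀ i, a i ∈ I) → qam I f a ≤ qam I g a

/-- `A^[f] = A^[g]` : equality of the two quasi-arithmetic means as means. -/
def qamEQ (I : Set ℝ) (f g : ℝ → ℝ) : Prop :=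
  ∀ n : ℕ, 1 ≤ n → ∀ a : Fin n → ℝ, (∀ i, a i ∈ I) → qam I f a = qam I g a

/-- `f` is strictly monotone on `I` (strictly increasing or strictly decreasing). -/
def StrictMonoOrAntiOn (f : ℝ → ℝ) (I : Set ℝ) : Prop :=
  StrictMonoOn f I ∨ StrictAntiOn f I

/-!
If `f = α g + β` on `I`, a point where `g` takes its average over `a` is a point where `f` takes its
average over `a`, so injectivity of `f` identifies the two means.

Conversely, only means of two variables are needed. Their equality says that between any two
points `s < t` of `I` there is a point at which `f` and `g` simultaneously take the averages of
their values at `s` and `t`. Fix `x < y` in `I`. The points `u` of `[x, y]` for which `(g u, f u)`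
lies on the line through `(g x, f x)` and `(g y, f y)` form a closed set containing `x` and `y`,
with a further member strictly between any two of its members. Such a set has no gaps, so it is all
of `[x, y]`. Hence any three points of the curve `(g, f)` are collinear.
-/

section CommonMidpoints

variable {X : Type*} [ConditionallyCompleteLinearOrder X] [TopologicalSpace X] [OrderTopology X]

theorem ordConnected_of_isClosed_of_inter_Ioo_nonempty {S : Set X} (hS : IsClosed S)
    (hbetween : ∀ s ∈ S, ∀ t ∈ S, s < t → (S ∩ Ioo s t).Nonempty) : S.OrdConnected := by
  refine ⟨fun x hx y hy u hu => ?_⟩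
  by_contra huS
  obtain ⟨s, ⟨hsS, hsu⟩, hs_max⟩ : ∃ s, IsGreatest (S ∩ Iic u) s :=
    ⟨_, (hS.inter isClosed_Iic).isGreatest_csSup ⟨x, hx, hu.1⟩
      (bddAbove_Iic.mono inter_subset_right)⟩
  obtain ⟨t, ⟨htS, hut⟩, ht_min⟩ : ∃ t, IsLeast (S ∩ Ici u) t :=
    ⟨_, (hS.inter isClosed_Ici).isLeast_csInf ⟨y, hy, hu.2⟩
      (bddBelow_Ici.mono inter_subset_right)⟩
  have hsu' : s < u := lt_of_le_of_ne hsu fun h => huS (h ▸ hsS)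
  obtain ⟨m, hmS, hsm, hmt⟩ := hbetween s hsS t htS (hsu'.trans_le hut)
  rcases le_total m u with hmu | hum
  · exact hsm.not_ge (hs_max ⟨hmS, hmu⟩)
  · exact hmt.not_ge (ht_min ⟨hmS, hum⟩)

variable {f g : X → ℝ} {x y u : X}

theorem sub_mul_sub_eq_of_common_midpoints
    (hf : ContinuousOn f (Icc x y)) (hg : ContinuousOn g (Icc x y))
    (hmid : ∀ s ∈ Icc x y, ∀ t ∈ Icc x y, s < t →
      ∃ m ∈ Ioo s t, f m = (f s + f t) / 2 ∧ g m = (g s + g t) / 2)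
    (hu : u ∈ Icc x y) : (f u - f x) * (g y - g x) = (f y - f x) * (g u - g x) := by
  let h : X → ℝ := fun v => (f v - f x) * (g y - g x) - (f y - f x) * (g v - g x)
  have hh : ContinuousOn h (Icc x y) := by fun_prop
  have hxy : x ≤ y := hu.1.trans hu.2
  have hconn : (Icc x y ∩ h ⁻¹' {0}).OrdConnected := by
    refine ordConnected_of_isClosed_of_inter_Ioo_nonempty
      (hh.preimage_isClosed_of_isClosed isClosed_Icc isClosed_singleton) ?_
    rintro s ⟨hs, hs0 : h s = 0⟩ t ⟨ht, ht0 : h t = 0⟩ hst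
    obtain ⟨m, hm, hfm, hgm⟩ := hmid s hs t ht hst
    have hm0 : h m = 0 := by
      simp only [h, hfm, hgm] at hs0 ht0 ⊢
      linear_combination (hs0 + ht0) / 2
    exact ⟨m, ⟨⟨hs.1.trans hm.1.le, hm.2.le.trans ht.2⟩, hm0⟩, hm⟩
  have hx0 : h x = 0 := by simp only [h]; ring
  have hy0 : h y = 0 := by simp only [h]; ring
  have hu0 : h u = 0 :=
    (hconn.out ⟨left_mem_Icc.2 hxy, hx0⟩ ⟨right_mem_Icc.2 hxy, hy0⟩ hu).2
  exact sub_eq_zero.1 hu0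

theorem exists_affine_of_common_midpoints {I : Set X} (hI : I.OrdConnected)
    (hf : ContinuousOn f I) (hg : ContinuousOn g I)
    (hmid : ∀ s ∈ I, ∀ t ∈ I, s < t →
      ∃ m ∈ Ioo s t, f m = (f s + f t) / 2 ∧ g m = (g s + g t) / 2)
    (hx : x ∈ I) (hy : y ∈ I) (hgxy : g x ≠ g y) :
    ∃ α β : ℝ, ∀ z ∈ I, f z = α * g z + β := by
  wlog hxy : x ≤ y generalizing x y
  · exact this hy hx hgxy.symm (le_of_not_ge hxy)
  have collinear : ∀ a ∈ I, ∀ c ∈ I, ∀ b ∈ Icc a c,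
      (f b - f a) * (g c - g a) = (f c - f a) * (g b - g a) := by
    intro a ha c hc b hb
    have hac : Icc a c ⊆ I := hI.out ha hc
    exact sub_mul_sub_eq_of_common_midpoints (hf.mono hac) (hg.mono hac)
      (fun s hs t ht => hmid s (hac hs) t (hac ht)) hb
  have hg0 : g y - g x ≠ 0 := sub_ne_zero.2 hgxy.symm
  refine ⟨(f y - f x) / (g y - g x), f x - (f y - f x) / (g y - g x) * g x, fun z hz => ?_⟩
  suffices (f z - f x) * (g y - g x) = (f y - f x) * (g z - g x) by
    field_simp
    linear_combination this
  rcases le_total z x with hzx | hxz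
  · linear_combination -collinear z hz y hy x ⟨hzx, hxy⟩
  rcases le_total z y with hzy | hyz
  · exact collinear x hx y hy z ⟨hxz, hzy⟩
  · exact (collinear x hx z hz y ⟨hxy, hyz⟩).symm

end CommonMidpoints

theorem average_mem_image_of_isPreconnected {X ι : Type*} [TopologicalSpace X] {K : Set X}
    {f : X → ℝ} (hK : IsPreconnected K) (hf : ContinuousOn f K) {s : Finset ι} (hs : s.Nonempty)
    {a : ι → X} (ha : ∀ i ∈ s, a i ∈ K) : (∑ i ∈ s, f (a i)) / s.card ∈ f '' K := by
  have hconv : Convex ℝ (f '' K) := (hK.image f hf).ordConnected.convex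
  have hcard : (s.card : ℝ) ≠ 0 := Nat.cast_ne_zero.2 hs.card_ne_zero
  have hweights : ∑ _i ∈ s, (s.card : ℝ)⁻¹ = 1 := by simp [hcard]
  have hmem := hconv.sum_mem (fun _ _ => by positivity) hweights
    fun i hi => mem_image_of_mem f (ha i hi)
  rwa [← Finset.smul_sum, smul_eq_mul, inv_mul_eq_div] at hmem

section Qam

variable {I : Set ℝ} {f g : ℝ → ℝ} {n : ℕ} {a : Fin n → ℝ} {s t : ℝ}

theorem average_mem_image (hI : I.OrdConnected) (hf : ContinuousOn f I) (hn : 1 ≤ n)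
    (ha : ∀ i, a i ∈ I) : (∑ i, f (a i)) / n ∈ f '' I := by
  have : NeZero n := ⟨Nat.one_le_iff_ne_zero.1 hn⟩
  simpa only [Finset.card_fin] using
    average_mem_image_of_isPreconnected hI.isPreconnected hf Finset.univ_nonempty fun i _ => ha i

theorem qam_mem (hI : I.OrdConnected) (hf : ContinuousOn f I) (hn : 1 ≤ n)
    (ha : ∀ i, a i ∈ I) : qam I f a ∈ I :=
  invFunOn_mem (average_mem_image hI hf hn ha)

theorem apply_qam (hI : I.OrdConnected) (hf : ContinuousOn f I) (hn : 1 ≤ n)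
    (ha : ∀ i, a i ∈ I) : f (qam I f a) = (∑ i, f (a i)) / n :=
  invFunOn_eq (average_mem_image hI hf hn ha)

theorem qam_eq_of_apply_eq (hf : InjOn f I) {m : ℝ} (hm : m ∈ I)
    (hfm : f m = (∑ i, f (a i)) / n) : qam I f a = m := by
  rw [qam, ← hfm]
  exact hf.leftInvOn_invFunOn hm

theorem apply_qam_pair (hI : I.OrdConnected) (hf : ContinuousOn f I) (hs : s ∈ I) (ht : t ∈ I) :
    f (qam I f ![s, t]) = (f s + f t) / 2 := by
  simpa using apply_qam hI hf one_le_two (a := ![s, t]) (by simp [Fin.forall_fin_two, hs, ht])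

theorem qam_mem_Icc (hf : ContinuousOn f I) (hinj : InjOn f I) (hsub : Icc s t ⊆ I)
    (hn : 1 ≤ n) (ha : ∀ i, a i ∈ Icc s t) : qam I f a ∈ Icc s t := by
  obtain ⟨m, hm, hfm⟩ := average_mem_image ordConnected_Icc (hf.mono hsub) hn ha
  rwa [qam_eq_of_apply_eq hinj (hsub hm) hfm]

theorem qam_pair_mem_Ioo (hI : I.OrdConnected) (hf : ContinuousOn f I) (hinj : InjOn f I)
    (hs : s ∈ I) (ht : t ∈ I) (hst : s < t) : qam I f ![s, t] ∈ Ioo s t := by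
  have hne : f s ≠ f t := hinj.ne hs ht hst.ne
  have havg := apply_qam_pair hI hf hs ht
  obtain ⟨hle_left, hle_right⟩ : qam I f ![s, t] ∈ Icc s t :=
    qam_mem_Icc hf hinj (hI.out hs ht) one_le_two (by simp [Fin.forall_fin_two, hst.le])
  refine ⟨hle_left.lt_of_ne fun h => hne ?_, hle_right.lt_of_ne fun h => hne ?_⟩
  · rw [← h] at havg
    linarith
  · rw [h] at havg
    linarith

theorem qamEQ_of_affine (hI : I.OrdConnected) (hg : ContinuousOn g I) (hinj : InjOn f I)
    {α β : ℝ} (hfg : ∀ x ∈ I, f x = α * g x + β) : qamEQ I f g := by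
  intro n hn a ha
  have hn0 : (n : ℝ) ≠ 0 := Nat.cast_ne_zero.2 (Nat.one_le_iff_ne_zero.1 hn)
  have hmem : qam I g a ∈ I := qam_mem hI hg hn ha
  refine qam_eq_of_apply_eq hinj hmem ?_
  calc
    f (qam I g a) = α * ((∑ i, g (a i)) / n) + β := by rw [hfg _ hmem, apply_qam hI hg hn ha]
    _ = (∑ i, (α * g (a i) + β)) / n := by
      rw [Finset.sum_add_distrib, ← Finset.mul_sum, Fin.sum_const, nsmul_eq_mul]
      field_simp
    _ = (∑ i, f (a i)) / n := by simp only [hfg _ (ha _)]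

theorem exists_affine_of_qam_pair_eq (hI : I.OrdConnected) (hf : ContinuousOn f I)
    (hg : ContinuousOn g I) (hinj : InjOn f I)
    (h : ∀ s ∈ I, ∀ t ∈ I, qam I f ![s, t] = qam I g ![s, t])
    {x y : ℝ} (hx : x ∈ I) (hy : y ∈ I) (hgxy : g x ≠ g y) :
    ∃ α β : ℝ, ∀ z ∈ I, f z = α * g z + β := by
  refine exists_affine_of_common_midpoints hI hf hg (fun s hs t ht hst => ?_) hx hy hgxy
  refine ⟨qam I f ![s, t], qam_pair_mem_Ioo hI hf hinj hs ht hst, apply_qam_pair hI hf hs ht, ?_⟩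
  rw [h s hs t ht, apply_qam_pair hI hg hs ht]

end Qam

theorem StrictMonoOrAntiOn.injOn {f : ℝ → ℝ} {I : Set ℝ} (h : StrictMonoOrAntiOn f I) :
    InjOn f I :=
  h.elim StrictMonoOn.injOn StrictAntiOn.injOn

/-- `A^[f] = A^[g]` iff `f = α·g + β` on `I` for some `α ≠ 0`. -/
theorem qam_eq_iff_affine
    (I : Set ℝ) (hI : I.OrdConnected) (hInontriv : ∃ x ∈ I, ∃ y ∈ I, x < y)
    (f g : ℝ → ℝ) (hfc : ContinuousOn f I) (hgc : ContinuousOn g I)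
    (hfm : StrictMonoOrAntiOn f I) (hgm : StrictMonoOrAntiOn g I) :
    qamEQ I f g ↔ ∃ α β : ℝ, α ≠ 0 ∧ ∀ x ∈ I, f x = α * g x + β := by
  obtain ⟨x, hx, y, hy, hxy⟩ := hInontriv
  constructor
  · intro h
    have hpair : ∀ s ∈ I, ∀ t ∈ I, qam I f ![s, t] = qam I g ![s, t] := fun s hs t ht =>
      h 2 one_le_two ![s, t] (by simp [Fin.forall_fin_two, hs, ht])
    obtain ⟨α, β, hfg⟩ := exists_affine_of_qam_pair_eq hI hfc hgc hfm.injOn hpair hx hy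
      (hgm.injOn.ne hx hy hxy.ne)
    refine ⟨α, β, ?_, hfg⟩
    rintro rfl
    exact hfm.injOn.ne hx hy hxy.ne (by simp [hfg x hx, hfg y hy])
  · rintro ⟨α, β, -, hfg⟩
    exact qamEQ_of_affine hI hgc hfm.injOn hfg
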